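/- Let D be a non-trivial, non-symmetric 2-(v,k,3) design with 3 dividing r, admitting a flag-transitive, point-primitive automorphism group G that is almost simple with socle X = PSL(2,q), where X acts point-primitively on D with point stabilizer X_α maximal in X. Then X_α is not isomorphic to S4; that is, the case q = p prime with p ≡ ±1 (mod 8), X_α ≅ S4 and v = q(q²−1)/48, does not occur. -/

import Mathlib

/-!
Write `r = 3 r'` and suppose `X_α ≅ S₄`. An element of order four of `PSL(2,q)` lifts to a matrix
`A ∈ SL(2,q)` with `tr(A)² = 2`; hence `q` is odd and `48 v = q (q² - 1)`. The centralizer of `A`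
is in bijection with the points of a conic, so the centralizer of an element of order four in
`PSL(2,q)` has between `(q - 2) / 2` and `(q + 1) / 2` elements (`card_centralizer_PSL`).
Consequently such an element fixes at most `(q + 1) / 8` points (`card_fix_le`), and if `q ≥ 11`
and it fixes `α`, it fixes another point as well (`exists_fix`).

Let `q ≥ 11`, and let `S` be the set of points other than `α` that are fixed by some element of
order four of `X_α`. As `S₄` has three cyclic subgroups of order four,
`0 < |S| ≤ 3 ((q + 1) / 8 - 1)`. The set `S` is invariant under `G_α`, which is transitive on the
blocks through `α`, so all these blocks meet `S` equally often and `r ∣ 3 |S|` (`rep_dvd`), that is,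
`r' ∣ |S|`. So `r'` is at most linear in `q`. But `r' (k - 1) = v - 1`, with `k ≤ r` by Fisher's
inequality, bounds `v` by a quadratic polynomial in `q`, a contradiction (`no_large`).

If `q < 11`, then `v` is `7` or `15`, and the parameters force `k = 3` with `r` odd (`small_cases`).
The orbits of `X_α` on the blocks through `α` then have size at most `3`, so the square of an element
of order four fixes all blocks through `α` (`sq_smul_block`), hence all points (`fix_of_three`),
against faithfulness.
-/

open scoped Pointwise
open Matrix

namespace FT

variable {Pt : Type*}

/-- `IsDesign 𝓑 k lam` says that the family `𝓑` of subsets of the point set `Pt` is the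
block set of a `2-(v, k, lam)` design: every block has `k` points and any two distinct
points lie on exactly `lam` common blocks. -/
structure IsDesign (𝓑 : Set (Set Pt)) (k lam : ℕ) : Prop where
  block_card : ∀ B ∈ 𝓑, Nat.card B = k
  pair_count : ∀ x y : Pt, x ≠ y → Nat.card {B : Set Pt | B ∈ 𝓑 ∧ x ∈ B ∧ y ∈ B} = lam

/-- The group `G` acts on the design with point set `Pt` and block set `𝓑` as a group of
automorphisms. -/
def ActsOn (G : Type*) [Group G] [MulAction G Pt] (𝓑 : Set (Set Pt)) : Prop :=
  ∀ (g : G), ∀ B ∈ 𝓑, g • B ∈ 𝓑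

/-- The group `G` is transitive on the flags (incident point-block pairs) of the design. -/
def FlagTransitive (G : Type*) [Group G] [MulAction G Pt] (𝓑 : Set (Set Pt)) : Prop :=
  ∀ B ∈ 𝓑, ∀ C ∈ 𝓑, ∀ x ∈ B, ∀ y ∈ C, ∃ g : G, g • B = C ∧ g • x = y

/-- The action of `G` on `Pt` is primitive: it is transitive and every block of
imprimitivity is trivial. -/
def PointPrimitive (G : Type*) [Group G] (Pt : Type*) [MulAction G Pt] : Prop :=
  MulAction.IsPretransitive G Pt ∧
    ∀ s : Set Pt, MulAction.IsBlock G s → s.Subsingleton ∨ s = Set.univ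

/-- The number of blocks of `𝓑` through the point `x` (the replication number, for a
flag-transitive design). -/
noncomputable def repNum (𝓑 : Set (Set Pt)) (x : Pt) : ℕ :=
  Nat.card {B : Set Pt | B ∈ 𝓑 ∧ x ∈ B}

/-- The projective general linear group `PGL(2,K)`, as the quotient of `GL(2,K)` by its
center. -/
abbrev PGL2 (K : Type*) [Field K] :=
  GL (Fin 2) K ⧸ Subgroup.center (GL (Fin 2) K)

/-- The projective special linear group `PSL(2,K)`. -/
abbrev PSL2 (K : Type*) [Field K] := Matrix.ProjectiveSpecialLinearGroup (Fin 2) K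

end FT

open FT

namespace FT

/-! ### Centralizers of elements of order four in `PSL(2,q)` -/

/-- The group `SL(2,K)`. -/
abbrev SL2 (K : Type*) [Field K] := Matrix.SpecialLinearGroup (Fin 2) K

/-- The conic `x² + txy + y² = 1` is parametrized by the slope `m = (x - 1) / y` of the line joining
a point to `(1, 0)`. The point `(1, 0)` itself is sent to `-t/2`, the slope of its tangent, which no
other point attains because `t² = 2 ≠ 4`; the point `(-1, 0)` is sent to infinity. -/
lemma conic_le {F : Type*} [Field F] [Fintype F] (t : F) (h2 : (2:F) ≠ 0) (ht : t^2 = 2) :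
    Nat.card {z : F × F // z.1^2 + t*z.1*z.2 + z.2^2 = 1} ≤ Fintype.card F + 1 := by
  classical
  rw [← Fintype.card_option, ← Nat.card_eq_fintype_card (α := Option F)]
  let f : {z : F × F // z.1^2 + t*z.1*z.2 + z.2^2 = 1} → Option F := fun z =>
    if z.1.2 = 0 then (if z.1.1 = 1 then some (-t/2) else none) else some ((z.1.1 - 1)/z.1.2)
  refine Nat.card_le_card_of_injective f ?_
  -- substituting `x = 1 + m * y` in the equation of the conic and dividing by `y`
  have key : ∀ x y : F, x^2 + t*x*y + y^2 = 1 → y ≠ 0 →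
      y * (((x-1)/y)^2 + t * ((x-1)/y) + 1) = -(2 * ((x-1)/y) + t) := by
    intro x y h hy
    field_simp
    linear_combination h
  have key2 : ∀ x y : F, x^2 + t*x*y + y^2 = 1 → y ≠ 0 → (x-1)/y ≠ -t/2 := by
    intro x y h hy h'
    have := key x y h hy
    rw [h'] at this
    field_simp at this
    have h3 : y * 2 = 0 := by linear_combination this + y * ht
    exact (mul_ne_zero hy h2) h3
  have key3 : ∀ m : F, m ≠ -t/2 → m^2 + t*m + 1 = 0 → 2*m+t ≠ 0 := by
    intro m hm _ h
    apply hm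
    field_simp
    linear_combination h
  rintro ⟨⟨x, y⟩, h⟩ ⟨⟨x', y'⟩, h'⟩ hf
  simp only [f] at h h' hf
  simp only [Subtype.mk.injEq, Prod.mk.injEq]
  by_cases hy : y = 0 <;> by_cases hy' : y' = 0
  · subst hy; subst hy'
    have hx : (x - 1) * (x + 1) = 0 := by linear_combination h
    have hx' : (x' - 1) * (x' + 1) = 0 := by linear_combination h'
    simp only [if_true] at hf
    refine ⟨?_, rfl⟩
    by_cases h1 : x = 1 <;> by_cases h1' : x' = 1
    · rw [h1, h1']
    · simp [h1, h1'] at hf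
    · simp [h1, h1'] at hf
    · have := (mul_eq_zero.1 hx).resolve_left (sub_ne_zero.2 h1)
      have := (mul_eq_zero.1 hx').resolve_left (sub_ne_zero.2 h1')
      linear_combination (mul_eq_zero.1 hx).resolve_left (sub_ne_zero.2 h1) - this
  · exfalso
    simp only [hy, hy', if_true, if_false] at hf
    split_ifs at hf
    exact key2 x' y' h' hy' (Option.some.inj hf).symm
  · exfalso
    simp only [hy, hy', if_true, if_false] at hf
    split_ifs at hf
    exact key2 x y h hy (Option.some.inj hf)
  · simp only [hy, hy', if_false] at hf
    have hm := Option.some.inj hf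
    have k1 := key x y h hy
    have k2 := key x' y' h' hy'
    have k3 := key2 x y h hy
    rw [← hm] at k2
    have hx : x = 1 + (x-1)/y * y := by field_simp; ring
    have hx' : x' = 1 + (x-1)/y * y' := by rw [hm]; field_simp; ring
    generalize (x-1)/y = m at *
    have hne : m^2 + t*m + 1 ≠ 0 := by
      intro h0
      apply key3 m k3 h0
      rw [h0] at k1
      linear_combination k1
    have : y = y' := mul_right_cancel₀ hne (k1.trans k2.symm)
    exact ⟨by rw [hx, hx', this], this⟩

/-- Each slope `m` with `m² + tm + 1 ≠ 0` (all but at most two) yields its own point of the conic: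
the second intersection with the line of slope `m` through `(1, 0)`. -/
lemma le_conic {F : Type*} [Field F] [Fintype F] (t : F) (h2 : (2:F) ≠ 0) :
    Fintype.card F ≤ Nat.card {z : F × F // z.1^2 + t*z.1*z.2 + z.2^2 = 1} + 2 := by
  classical
  let R : Finset F := Finset.univ.filter fun m => m^2 + t*m + 1 = 0
  have hR : R.card ≤ 2 := by
    rcases R.eq_empty_or_nonempty with h | ⟨m₀, hm₀⟩
    · simp [h]
    · refine (Finset.card_le_card (t := {m₀, -t - m₀}) ?_).trans Finset.card_le_two
      intro m hm
      simp only [R, Finset.mem_filter, Finset.mem_univ, true_and] at hm hm₀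
      have : (m - m₀) * (m - (-t - m₀)) = 0 := by linear_combination hm - hm₀
      rcases mul_eq_zero.1 this with h | h
      · simp [sub_eq_zero.1 h]
      · simp [sub_eq_zero.1 h]
  have hcard : Nat.card {m : F // m ∉ R} + R.card = Fintype.card F := by
    rw [Nat.card_eq_fintype_card, Fintype.card_subtype_compl, Fintype.card_coe]
    exact Nat.sub_add_cancel (Finset.card_le_univ R)
  have hmem : ∀ m : F, m ∉ R → m^2 + t*m + 1 ≠ 0 := by
    intro m hm h; exact hm (by simp [R, h])
  let y : F → F := fun m => -(2*m+t)/(m^2+t*m+1)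
  have hinj : Nat.card {m : F // m ∉ R} ≤
      Nat.card {z : F × F // z.1^2 + t*z.1*z.2 + z.2^2 = 1} := by
    refine Nat.card_le_card_of_injective
      (fun m => ⟨(1 + m.1 * y m.1, y m.1), ?_⟩) ?_
    · have := hmem m.1 m.2
      have hy : y m.1 * (m.1^2+t*m.1+1) = -(2*m.1+t) := div_mul_cancel₀ _ this
      linear_combination y m.1 * hy
    · rintro ⟨m, hm⟩ ⟨m', hm'⟩ h
      simp only [Subtype.mk.injEq, Prod.mk.injEq] at h
      have d := hmem m hm
      have d' := hmem m' hm'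
      obtain ⟨h1, hyy⟩ := h
      rw [Subtype.mk.injEq]
      by_cases h0 : y m = 0
      · have e : 2*m+t = 0 := by
          exact neg_eq_zero.1 ((div_eq_zero_iff.1 h0).resolve_right d)
        have e' : 2*m'+t = 0 := by
          rw [hyy] at h0
          exact neg_eq_zero.1 ((div_eq_zero_iff.1 h0).resolve_right d')
        exact mul_left_cancel₀ h2 (by linear_combination e - e')
      · rw [← hyy] at h1
        exact mul_right_cancel₀ h0 (by linear_combination h1)
  omega

/-- The centralizer of a non-scalar `2 × 2` matrix `A` is the algebra spanned by `1` and `A`. -/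
lemma commute_iff {F : Type*} [Field F] (A B : Matrix (Fin 2) (Fin 2) F)
    (hA : ∀ c : F, A ≠ scalar (Fin 2) c) :
    A * B = B * A ↔ ∃ x y : F, B = x • (1 : Matrix (Fin 2) (Fin 2) F) + y • A := by
  constructor
  · intro h
    have h00 := congr_fun (congr_fun h 0) 0
    have h01 := congr_fun (congr_fun h 0) 1
    have h10 := congr_fun (congr_fun h 1) 0
    have h11 := congr_fun (congr_fun h 1) 1
    simp only [Matrix.mul_apply, Fin.sum_univ_two] at h00 h01 h10 h11
    by_cases hb : A 0 1 = 0
    · by_cases hc : A 1 0 = 0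
      · have hd : A 0 0 - A 1 1 ≠ 0 := by
          intro hd
          apply hA (A 0 0)
          ext i j
          fin_cases i <;> fin_cases j <;> simp [hb, hc]
          linear_combination -hd
        have e1 : B 0 1 = 0 := by
          refine mul_left_cancel₀ hd ?_
          rw [hb] at h01
          linear_combination h01
        have e2 : B 1 0 = 0 := by
          refine mul_left_cancel₀ hd ?_
          rw [hc] at h10
          linear_combination -h10
        refine ⟨B 0 0 - (B 0 0 - B 1 1)/(A 0 0 - A 1 1) * A 0 0,
          (B 0 0 - B 1 1)/(A 0 0 - A 1 1), ?_⟩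
        ext i j
        fin_cases i <;> fin_cases j <;> simp [hb, hc, e1, e2]
        field_simp
        ring
      · refine ⟨B 1 1 - B 1 0 / A 1 0 * A 1 1, B 1 0 / A 1 0, ?_⟩
        ext i j
        fin_cases i <;> fin_cases j <;> simp [hb] <;> first | (field_simp; grind) | grind
    · refine ⟨B 0 0 - B 0 1 / A 0 1 * A 0 0, B 0 1 / A 0 1, ?_⟩
      ext i j
      fin_cases i <;> fin_cases j <;> simp <;> first | (field_simp; grind) | grind
  · rintro ⟨x, y, rfl⟩
    simp [mul_add, add_mul]

lemma det_add {F : Type*} [Field F] (A : Matrix (Fin 2) (Fin 2) F) (hA : A.det = 1) (x y : F) :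
    (x • (1 : Matrix (Fin 2) (Fin 2) F) + y • A).det = x^2 + A.trace * x * y + y^2 := by
  rw [Matrix.det_fin_two] at hA
  rw [Matrix.det_fin_two, Matrix.trace_fin_two]
  simp
  linear_combination y^2 * hA

/-- The Cayley–Hamilton relation for a `2 × 2` matrix of determinant one. -/
lemma sq_eq {F : Type*} [Field F] (A : Matrix (Fin 2) (Fin 2) F) (hA : A.det = 1) :
    A * A = A.trace • A - 1 := by
  rw [Matrix.det_fin_two] at hA
  rw [Matrix.trace_fin_two]
  ext i j
  fin_cases i <;> fin_cases j <;> simp [Matrix.mul_apply] <;> first | linear_combination -hA | ring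

/-- The determinant of `x + yA` is `x² + tr(A) xy + y²`, so the centralizer of a non-scalar `A` in
`SL(2,F)` is in bijection with the points of a conic. -/
lemma card_sl_commute {F : Type*} [Field F] (A : SL2 F)
    (hA : ∀ c : F, A.1 ≠ scalar (Fin 2) c) :
    Nat.card {B : SL2 F // A * B = B * A} =
      Nat.card {z : F × F // z.1^2 + A.1.trace*z.1*z.2 + z.2^2 = 1} := by
  symm
  refine Nat.card_congr (Equiv.ofBijective
    (fun z => ⟨⟨z.1.1 • 1 + z.1.2 • A.1, (det_add A.1 A.2 _ _).trans z.2⟩, ?_⟩) ⟨?_, ?_⟩)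
  · apply Subtype.ext
    exact (commute_iff A.1 _ hA).2 ⟨_, _, rfl⟩
  · rintro ⟨⟨x, y⟩, h⟩ ⟨⟨x', y'⟩, h'⟩ e
    have e : x • (1 : Matrix (Fin 2) (Fin 2) F) + y • A.1 = x' • 1 + y' • A.1 := by
      exact congrArg (fun B => B.1.1) e
    have h00 := congr_fun (congr_fun e 0) 0
    have h01 := congr_fun (congr_fun e 0) 1
    have h10 := congr_fun (congr_fun e 1) 0
    have h11 := congr_fun (congr_fun e 1) 1
    simp at h00 h01 h10 h11
    have hy : y = y' := by
      by_contra hne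
      have hne : y - y' ≠ 0 := sub_ne_zero.2 hne
      apply hA (A.1 0 0)
      ext i j
      fin_cases i <;> fin_cases j <;> simp
      · grind
      · grind
      · exact mul_left_cancel₀ hne (by linear_combination h11 - h00)
    subst hy
    simpa using h00
  · rintro ⟨B, hB⟩
    obtain ⟨x, y, h⟩ := (commute_iff A.1 B.1 hA).1 (congrArg Subtype.val hB)
    refine ⟨⟨(x, y), ?_⟩, ?_⟩
    · have := det_add A.1 A.2 x y
      rw [← h, B.2] at this
      exact this.symm
    · apply Subtype.ext; apply Subtype.ext; exact h.symm

lemma mem_center {F : Type*} [Field F] (A : SL2 F) :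
    A ∈ Subgroup.center (SL2 F) ↔ ∃ c : F, A.1 = scalar (Fin 2) c := by
  rw [Matrix.SpecialLinearGroup.mem_center_iff]
  constructor
  · rintro ⟨c, _, h⟩; exact ⟨c, h.symm⟩
  · rintro ⟨c, h⟩
    refine ⟨c, ?_, h.symm⟩
    have := A.2
    rw [h] at this
    simpa using this

lemma card_center {F : Type*} [Field F] (h2 : (2:F) ≠ 0) :
    Nat.card (Subgroup.center (SL2 F)) = 2 := by
  have hne : (1 : SL2 F) ≠ -1 := by
    intro h
    have := congr_fun (congr_fun (congrArg Subtype.val h) 0) 0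
    simp at this
    exact h2 (by linear_combination this)
  have : (Subgroup.center (SL2 F) : Set (SL2 F)) = {1, -1} := by
    ext A
    rw [SetLike.mem_coe]
    constructor
    · intro h
      obtain ⟨c, hc, h⟩ := Matrix.SpecialLinearGroup.mem_center_iff.1 h
      have : (c - 1) * (c + 1) = 0 := by
        simp at hc
        rcases hc with hc | hc <;> rw [hc] <;> ring
      rcases mul_eq_zero.1 this with h' | h'
      · left
        apply Subtype.ext
        rw [← h, sub_eq_zero.1 h']; simp
      · right
        apply Subtype.ext
        rw [← h, eq_neg_of_add_eq_zero_left h']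
        ext i j; fin_cases i <;> fin_cases j <;> simp
    · rintro (rfl | rfl)
      · exact one_mem _
      · rw [mem_center]
        refine ⟨-1, ?_⟩
        ext i j; fin_cases i <;> fin_cases j <;> simp
  have h3 : Nat.card (Subgroup.center (SL2 F)) =
    (Subgroup.center (SL2 F) : Set (SL2 F)).ncard := rfl
  rw [h3, this, Set.ncard_pair hne]

lemma card_SL {F : Type*} [Field F] [Fintype F] :
    Nat.card (SL2 F) = Fintype.card F * (Fintype.card F ^ 2 - 1) := by
  have hdet : Function.Surjective (Matrix.GeneralLinearGroup.det : GL (Fin 2) F →* Fˣ) := by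
    intro u
    refine ⟨Matrix.GeneralLinearGroup.mkOfDetNeZero !![(u:F), 0; 0, 1] (by simp), ?_⟩
    ext
    simp [Matrix.GeneralLinearGroup.mkOfDetNeZero]
  have hker : Nat.card (MonoidHom.ker (Matrix.GeneralLinearGroup.det : GL (Fin 2) F →* Fˣ))
      = Nat.card (SL2 F) := by
    symm
    refine Nat.card_congr (Equiv.ofBijective
      (fun A => ⟨Matrix.SpecialLinearGroup.toGL A, ?_⟩) ⟨?_, ?_⟩)
    · rw [MonoidHom.mem_ker]; ext; exact A.2
    · intro A B h
      exact Matrix.SpecialLinearGroup.toGL_injective (congrArg Subtype.val h)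
    · rintro ⟨B, hB⟩
      refine ⟨⟨B.1, ?_⟩, ?_⟩
      · rw [MonoidHom.mem_ker] at hB
        exact congrArg Units.val hB
      · apply Subtype.ext; ext i j; rfl
  classical
  have h1 := Subgroup.card_eq_card_quotient_mul_card_subgroup
    (MonoidHom.ker (Matrix.GeneralLinearGroup.det : GL (Fin 2) F →* Fˣ))
  rw [Nat.card_congr (QuotientGroup.quotientKerEquivOfSurjective _ hdet).toEquiv, hker,
    Nat.card_eq_fintype_card (α := Fˣ), Fintype.card_units, Matrix.card_GL_field] at h1
  have hq : 1 < Fintype.card F := Fintype.one_lt_card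
  obtain ⟨m, hm⟩ : ∃ m, Fintype.card F = m + 2 := ⟨Fintype.card F - 2, by omega⟩
  rw [Fin.prod_univ_two] at h1
  rw [hm] at h1 ⊢
  have e1 : (m+2)^2 - (m+2)^((0:Fin 2):ℕ) = (m+1)*(m+3) := by
    simp; ring_nf; omega
  have e2 : (m+2)^2 - (m+2)^((1:Fin 2):ℕ) = (m+1)*(m+2) := by
    simp; ring_nf; omega
  have e3 : (m+2)^2 - 1 = (m+1)*(m+3) := by
    ring_nf; omega
  rw [e1, e2, show m + 2 - 1 = m + 1 from rfl] at h1
  rw [e3]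
  refine Nat.eq_of_mul_eq_mul_left (Nat.succ_pos m) ?_
  rw [Nat.succ_eq_add_one, ← h1]; ring

lemma card_PSL {F : Type*} [Field F] [Fintype F] (h2 : (2:F) ≠ 0) :
    2 * Nat.card (PSL2 F)
      = Fintype.card F * (Fintype.card F ^ 2 - 1) := by
  rw [← card_SL, Subgroup.card_eq_card_quotient_mul_card_subgroup
    (Subgroup.center (SL2 F)), card_center h2, mul_comm]

/-- If the image of `A` in `PSL(2,F)` has order four, then `A⁴` is scalar while `A²` is not, so
Cayley–Hamilton for `A²` forces `tr(A²) = tr(A)² - 2` to vanish. In characteristic two this would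
give `tr(A) = 0` and hence `A²` scalar. -/
lemma trace_of_order_four {F : Type*} [Field F] (A : SL2 F)
    (h : orderOf (A : PSL2 F) = 4) :
    (2:F) ≠ 0 ∧ A.1.trace ^ 2 = 2 ∧ ∀ c : F, A.1 ≠ scalar (Fin 2) c := by
  have hsq : ∀ c : F, A.1 * A.1 ≠ scalar (Fin 2) c := by
    intro c hc
    have h1 : A * A ∈ Subgroup.center (SL2 F) :=
      (mem_center _).2 ⟨c, hc⟩
    have h2 : (A : PSL2 F) ^ 2 = 1 := by
      rw [pow_two]
      exact (QuotientGroup.eq_one_iff (A * A)).2 h1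
    have := orderOf_dvd_of_pow_eq_one h2
    rw [h] at this
    omega
  have hfour : ∃ c : F, (A.1 * A.1) * (A.1 * A.1) = scalar (Fin 2) c := by
    have h1 : (A : PSL2 F) ^ 4 = 1 := h ▸ pow_orderOf_eq_one _
    have h1 : ((A ^ 4 : SL2 F) : PSL2 F) = 1 := h1
    rw [QuotientGroup.eq_one_iff, mem_center] at h1
    obtain ⟨c, hc⟩ := h1
    refine ⟨c, hc ▸ ?_⟩
    have : A ^ 4 = (A * A) * (A * A) := by simp only [pow_succ, pow_zero, one_mul, mul_assoc]
    rw [this]; rfl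
  obtain ⟨c, hc⟩ := hfour
  have e := sq_eq A.1 A.2
  set t := A.1.trace with ht
  have htr : (A.1 * A.1).trace = t^2 - 2 := by
    rw [e, Matrix.trace_sub, Matrix.trace_smul, ← ht]
    simp [pow_two]
  have e2 := sq_eq (A.1 * A.1) (by rw [Matrix.det_mul, A.2, one_mul])
  rw [htr, hc] at e2
  have ht2 : t^2 = 2 := by
    by_contra hne
    have hne : t^2 - 2 ≠ 0 := sub_ne_zero.2 hne
    apply hsq ((t^2-2)⁻¹ * (c+1))
    have : (t^2-2) • (A.1 * A.1) = scalar (Fin 2) (c+1) := by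
      rw [map_add, map_one, e2]; abel
    rw [← inv_smul_smul₀ hne (A.1 * A.1), this]
    ext i j; fin_cases i <;> fin_cases j <;> simp
  refine ⟨?_, ht2, ?_⟩
  · intro h0
    rw [h0] at ht2
    have : t = 0 := by simpa using ht2
    apply hsq (-1)
    rw [e, this]
    ext i j; fin_cases i <;> fin_cases j <;> simp
  · intro c hc
    apply hsq (c*c)
    rw [hc, map_mul]

/-- The centralizer of an element of order four in `PSL(2,q)` has between `(q - 2) / 2` and
`(q + 1) / 2` elements. The essential point is that it lifts to the centralizer in `SL(2,q)` of
a preimage `A`: if `AB = cBA`, then comparing traces, with `tr(A) ≠ 0`, gives `c = 1`. -/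
lemma card_centralizer_PSL {F : Type*} [Field F] [Fintype F]
    (g : PSL2 F) (h : orderOf g = 4) :
    (2:F) ≠ 0 ∧
    2 * Nat.card {x : PSL2 F // g * x = x * g}
      ≤ Fintype.card F + 1 ∧
    Fintype.card F ≤
      2 * Nat.card {x : PSL2 F // g * x = x * g} + 2 := by
  obtain ⟨A, rfl⟩ := QuotientGroup.mk_surjective g
  obtain ⟨h2, ht, hA⟩ := trace_of_order_four A h
  have hpre := QuotientGroup.card_preimage_mk (Subgroup.center (SL2 F))
    {x : PSL2 F | (A : PSL2 F) * x = x * A}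
  have hset : ((QuotientGroup.mk : SL2 F →
        PSL2 F) ⁻¹'
      {x : PSL2 F | (A : PSL2 F) * x = x * A})
      = {B | A * B = B * A} := by
    ext B
    simp only [Set.mem_preimage, Set.mem_ofPred_eq]
    constructor
    · intro h
      have h : ((A * B : SL2 F) : PSL2 F) = (B * A : SL2 F) := h
      rw [eq_comm, QuotientGroup.eq, mem_center] at h
      obtain ⟨c, hc⟩ := h
      have h3 : A.1 * B.1 = c • (B.1 * A.1) := by
        have : A * B = (B * A) * ((B * A)⁻¹ * (A * B)) := by group
        have := congrArg Subtype.val this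
        rw [Matrix.SpecialLinearGroup.coe_mul, Matrix.SpecialLinearGroup.coe_mul (B * A), hc] at this
        rw [this]
        ext i j; fin_cases i <;> fin_cases j <;> simp [mul_comm]
      have hBB : B.1 * (B⁻¹).1 = 1 := congrArg Subtype.val (mul_inv_cancel B)
      have hBB' : (B⁻¹).1 * B.1 = 1 := congrArg Subtype.val (inv_mul_cancel B)
      have h4 : A.1 = c • (B.1 * A.1 * (B⁻¹).1) := by
        rw [← Matrix.smul_mul, ← h3, Matrix.mul_assoc, hBB, Matrix.mul_one]
      have h5 : A.1.trace = c * A.1.trace := by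
        have := congrArg Matrix.trace h4
        rwa [Matrix.trace_smul, Matrix.trace_mul_comm, ← Matrix.mul_assoc, hBB', Matrix.one_mul,
          smul_eq_mul] at this
      have ht0 : A.1.trace ≠ 0 := by
        intro h0; rw [h0] at ht; exact h2 (by rw [← ht]; ring)
      have hc1 : c = 1 := by
        apply mul_right_cancel₀ ht0; rw [← h5, one_mul]
      apply Subtype.ext
      rw [hc1, one_smul] at h3
      exact h3
    · intro h
      exact congrArg (QuotientGroup.mk : SL2 F →
        PSL2 F) h
  rw [hset, card_center h2] at hpre
  have h6 := card_sl_commute A hA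
  have h7 := conic_le A.1.trace h2 ht
  have h8 := le_conic A.1.trace h2
  have h9 : Nat.card {B | A * B = B * A} = 2 * Nat.card {x : PSL2 F // (A : PSL2 F) * x = x * A} := hpre
  have h10 : Nat.card {B | A * B = B * A} = Nat.card {B : SL2 F // A * B = B * A} := rfl
  refine ⟨h2, ?_, ?_⟩ <;> omega
end FT

/-! ### Counting in flag-transitive designs -/

namespace FT

/-- The blocks of the design through a given point, as a finset. -/
noncomputable def blocksAt {Pt : Type*} [Fintype Pt] (𝓑 : Set (Set Pt)) (α : Pt) :
    Finset (Set Pt) := by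
  classical exact Finset.univ.filter fun B => B ∈ 𝓑 ∧ α ∈ B

section Design

variable {Pt : Type*} [Fintype Pt] {𝓑 : Set (Set Pt)} {k : ℕ}

lemma mem_blocksAt {α : Pt} {B : Set Pt} : B ∈ blocksAt 𝓑 α ↔ B ∈ 𝓑 ∧ α ∈ B := by
  classical simp [blocksAt]

lemma card_blocksAt (α : Pt) : (blocksAt 𝓑 α).card = repNum 𝓑 α := by
  classical
  rw [repNum, ← Nat.card_eq_finsetCard]
  exact Nat.card_congr (Equiv.subtypeEquivRight fun B => mem_blocksAt)

open scoped Classical in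
lemma card_pair (hD : IsDesign 𝓑 k 3) {α β : Pt} (h : α ≠ β) :
    ((blocksAt 𝓑 α).filter fun B => β ∈ B).card = 3 := by
  rw [← hD.pair_count α β h, ← Nat.card_eq_finsetCard]
  refine Nat.card_congr (Equiv.subtypeEquivRight fun B => ?_)
  rw [Finset.mem_filter, mem_blocksAt, and_assoc]
  rfl

open scoped Classical in
lemma card_block (hD : IsDesign 𝓑 k 3) {B : Set Pt} (hB : B ∈ 𝓑) :
    (Finset.univ.filter fun x => x ∈ B).card = k := by
  rw [← hD.block_card B hB, ← Nat.card_eq_finsetCard]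
  exact Nat.card_congr (Equiv.subtypeEquivRight fun x => by simp)

open scoped Classical in
/-- Double counting of the pairs `(B, x)` with `x ∈ T` and `B` a block through `α` and `x`. -/
lemma local_count (hD : IsDesign 𝓑 k 3) {α : Pt} (T : Finset Pt) (hT : α ∉ T) :
    ∑ B ∈ blocksAt 𝓑 α, (T.filter fun x => x ∈ B).card = 3 * T.card := by
  have h := Finset.sum_card_bipartiteAbove_eq_sum_card_bipartiteBelow
    (s := blocksAt 𝓑 α) (t := T) (fun B x => x ∈ B)
  simp only [Finset.bipartiteAbove, Finset.bipartiteBelow] at h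
  rw [h, Finset.sum_congr rfl fun x hx => card_pair hD (by rintro rfl; exact hT hx),
    Finset.sum_const, smul_eq_mul, mul_comm]

lemma rep_eq (hD : IsDesign 𝓑 k 3) (α : Pt) :
    repNum 𝓑 α * (k - 1) = 3 * (Nat.card Pt - 1) := by
  classical
  have h := local_count hD (α := α) (Finset.univ.erase α) (by simp)
  rw [Finset.card_erase_of_mem (Finset.mem_univ _), Finset.card_univ,
    ← Nat.card_eq_fintype_card] at h
  rw [← h, ← card_blocksAt, ← smul_eq_mul, ← Finset.sum_const]
  refine Finset.sum_congr rfl fun B hB => ?_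
  rw [mem_blocksAt] at hB
  rw [← card_block hD hB.1, Finset.filter_erase, Finset.card_erase_of_mem (by simp [hB.2])]

lemma flag_count (hD : IsDesign 𝓑 k 3) {r : ℕ} (hr : ∀ x : Pt, repNum 𝓑 x = r) :
    Nat.card 𝓑 * k = Nat.card Pt * r := by
  classical
  have h := Finset.sum_card_bipartiteAbove_eq_sum_card_bipartiteBelow
    (s := Finset.univ.filter (fun B => B ∈ 𝓑)) (t := (Finset.univ : Finset Pt)) (fun B x => x ∈ B)
  simp only [Finset.bipartiteAbove, Finset.bipartiteBelow] at h
  rw [Finset.sum_congr rfl fun B hB => card_block hD (Finset.mem_filter.1 hB).2,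
    Finset.sum_const, smul_eq_mul] at h
  have hb : (Finset.univ.filter (fun B => B ∈ 𝓑)).card = Nat.card 𝓑 := by
    rw [← Nat.card_eq_finsetCard]
    exact Nat.card_congr (Equiv.subtypeEquivRight fun x => by simp)
  rw [hb] at h
  rw [h, Nat.card_eq_fintype_card, ← Finset.card_univ, ← smul_eq_mul, ← Finset.sum_const]
  refine Finset.sum_congr rfl fun x _ => ?_
  rw [← hr x, ← card_blocksAt]
  congr 1
  ext B
  simp [mem_blocksAt]

/-- Fisher's inequality: a function on the points whose sum over every block vanishes is zero, so
the incidence map from functions on points to functions on blocks is injective. -/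
lemma fisher (hD : IsDesign 𝓑 k 3) {r : ℕ} (hr : ∀ x : Pt, repNum 𝓑 x = r) (h3 : 3 < r) :
    Nat.card Pt ≤ Nat.card 𝓑 := by
  classical
  let L : (Pt → ℚ) →ₗ[ℚ] (𝓑 → ℚ) :=
    { toFun := fun f B => ∑ x ∈ Finset.univ.filter (fun x => x ∈ B.1), f x
      map_add' := fun f g => by ext B; simp [Finset.sum_add_distrib]
      map_smul' := fun c f => by ext B; simp [Finset.mul_sum] }
  have hinj : Function.Injective L := by
    rw [injective_iff_map_eq_zero]
    intro f hf
    have hB : ∀ B ∈ 𝓑, ∑ x ∈ Finset.univ.filter (fun x => x ∈ B), f x = 0 := fun B hB =>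
      congr_fun hf ⟨B, hB⟩
    have key : ∀ α : Pt, ((r : ℚ) - 3) * f α + 3 * ∑ x, f x = 0 := by
      intro α
      have h0 : ∑ B ∈ blocksAt 𝓑 α, ∑ x ∈ Finset.univ.filter (fun x => x ∈ B), f x = 0 :=
        Finset.sum_eq_zero fun B hB' => hB B (mem_blocksAt.1 hB').1
      simp only [Finset.sum_filter] at h0
      rw [Finset.sum_comm] at h0
      simp only [← Finset.sum_filter, Finset.sum_const, nsmul_eq_mul] at h0
      rw [← Finset.add_sum_erase _ _ (Finset.mem_univ α)] at h0
      have h1 : ((blocksAt 𝓑 α).filter fun B => α ∈ B).card = r := by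
        rw [← hr α, ← card_blocksAt, Finset.filter_true_of_mem]
        intro B hB'; exact (mem_blocksAt.1 hB').2
      have h2 : ∑ x ∈ Finset.univ.erase α,
          ((((blocksAt 𝓑 α).filter fun B => x ∈ B).card : ℚ) * f x) =
          3 * ∑ x ∈ Finset.univ.erase α, f x := by
        rw [Finset.mul_sum]
        refine Finset.sum_congr rfl fun x hx => ?_
        rw [card_pair hD (Finset.ne_of_mem_erase hx).symm]
        norm_num
      rw [h1, h2] at h0
      have h4 := Finset.add_sum_erase Finset.univ f (Finset.mem_univ α)
      rw [← h4]
      linear_combination h0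
    have hr3 : (0:ℚ) < (r:ℚ) - 3 := by
      have : (3:ℚ) < r := by exact_mod_cast h3
      linarith
    have hsum : ∑ x, f x = 0 := by
      have h5 : ∑ α : Pt, (((r : ℚ) - 3) * f α + 3 * ∑ x, f x) = 0 :=
        Finset.sum_eq_zero fun α _ => key α
      rw [Finset.sum_add_distrib, ← Finset.mul_sum, Finset.sum_const, nsmul_eq_mul] at h5
      have h6 : ((r:ℚ) - 3 + 3 * (Finset.univ : Finset Pt).card) * ∑ x, f x = 0 := by
        linear_combination h5
      refine (mul_eq_zero.1 h6).resolve_left ?_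
      positivity
    funext α
    have := key α
    rw [hsum, mul_zero, add_zero] at this
    exact (mul_eq_zero.1 this).resolve_left hr3.ne'
  have := LinearMap.finrank_le_finrank_of_injective hinj
  rwa [Module.finrank_fintype_fun_eq_card, Module.finrank_fintype_fun_eq_card,
    ← Nat.card_eq_fintype_card, ← Nat.card_eq_fintype_card] at this

variable {G : Type*} [Group G] [MulAction G Pt]

/-- Since the stabilizer of `α` is transitive on the blocks through `α`, all these blocks meet
a given invariant set `T` in the same number of points. -/
lemma rep_dvd (hD : IsDesign 𝓑 k 3) (hflag : FlagTransitive G 𝓑) (α : Pt) (T : Finset Pt)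
    (hT : α ∉ T) (hinv : ∀ g : G, g • α = α → ∀ β ∈ T, g • β ∈ T) :
    repNum 𝓑 α ∣ 3 * T.card := by
  classical
  rw [← local_count hD T hT, ← card_blocksAt]
  rcases (blocksAt 𝓑 α).eq_empty_or_nonempty with h | ⟨B₀, hB₀⟩
  · simp [h]
  have hle : ∀ B ∈ blocksAt 𝓑 α, ∀ C ∈ blocksAt 𝓑 α,
      (T.filter fun x => x ∈ B).card ≤ (T.filter fun x => x ∈ C).card := by
    intro B hB C hC
    rw [mem_blocksAt] at hB hC
    obtain ⟨g, hg, hgα⟩ := hflag B hB.1 C hC.1 α hB.2 α hC.2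
    refine Finset.card_le_card_of_injOn (fun x => g • x) ?_ ?_
    · intro x hx
      have hx := Finset.mem_filter.1 hx
      refine Finset.mem_coe.2 (Finset.mem_filter.2 ⟨hinv g hgα x hx.1, ?_⟩)
      rw [← hg]
      exact Set.smul_mem_smul_set hx.2
    · intro x _ y _ h
      exact MulAction.injective g h
  rw [Finset.sum_congr rfl fun B hB => le_antisymm (hle B hB B₀ hB₀) (hle B₀ hB₀ B hB),
    Finset.sum_const, smul_eq_mul]
  exact Dvd.intro _ rfl

/-- The action of the stabilizer of a point on the blocks through that point. -/
abbrev blockAction (hacts : ActsOn G 𝓑) (α : Pt) :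
    MulAction (MulAction.stabilizer G α) {B : Set Pt // B ∈ 𝓑 ∧ α ∈ B} where
  smul g B := ⟨g.1 • B.1, hacts g.1 B.1 B.2.1, by
    have := Set.smul_mem_smul_set (a := g.1) B.2.2
    rwa [g.2] at this⟩
  one_smul B := Subtype.ext (one_smul G B.1)
  mul_smul g h B := Subtype.ext (mul_smul g.1 h.1 B.1)

/-- The orbits of the normal subgroup `X_α`, of order `24`, on the `r` blocks through `α` have equal
size. If `r` is odd, this size is an odd divisor of `24`, hence at most `3`; an element with
`g⁴ = 1` acts on such an orbit with cycles of length one or two. -/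
lemma sq_smul_block [Finite G] (hacts : ActsOn G 𝓑) (hflag : FlagTransitive G 𝓑) (X : Subgroup G)
    [X.Normal] (α : Pt) (hcard : Nat.card (MulAction.stabilizer X α) = 24)
    (hr : repNum 𝓑 α % 2 = 1)
    (g : G) (hgX : g ∈ X) (hgα : g • α = α) (hg4 : g ^ 4 = 1) (B : Set Pt) (hB : B ∈ 𝓑)
    (hαB : α ∈ B) : g ^ 2 • B = B := by
  classical
  let _ := blockAction hacts α
  let B' : {B : Set Pt // B ∈ 𝓑 ∧ α ∈ B} := ⟨B, hB, hαB⟩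
  let N : Subgroup (MulAction.stabilizer G α) := X.subgroupOf (MulAction.stabilizer G α)
  have : MulAction.IsPretransitive (MulAction.stabilizer G α) {B : Set Pt // B ∈ 𝓑 ∧ α ∈ B} := by
    constructor
    rintro ⟨C, hC⟩ ⟨E, hE⟩
    obtain ⟨h, h1, h2⟩ := hflag C hC.1 E hE.1 α hC.2 α hE.2
    exact ⟨⟨h, h2⟩, Subtype.ext h1⟩
  have hblk : MulAction.IsBlock (MulAction.stabilizer G α) (MulAction.orbit N B') :=
    MulAction.IsBlock.orbit_of_normal B'
  have h1 := hblk.ncard_dvd_card ⟨B', MulAction.mem_orbit_self B'⟩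
  have h2 : (MulAction.orbit N B').ncard ∣ 24 := by
    have hN : Nat.card N = 24 := by
      rw [← hcard]
      refine Nat.card_congr
        { toFun := fun n => ⟨⟨n.1.1, n.2⟩, n.1.2⟩
          invFun := fun x => ⟨⟨x.1.1, x.2⟩, x.1.2⟩
          left_inv := fun _ => rfl
          right_inv := fun _ => rfl }
    rw [← hN, ← MulAction.index_stabilizer]
    exact Subgroup.index_dvd_card _
  have h3 : Nat.card {B : Set Pt // B ∈ 𝓑 ∧ α ∈ B} = repNum 𝓑 α := rfl
  rw [h3] at h1
  have hn : (MulAction.orbit N B').ncard ≤ 3 := by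
    generalize (MulAction.orbit N B').ncard = n at h1 h2
    have hn : n ≤ 24 := Nat.le_of_dvd (by norm_num) h2
    obtain ⟨c, hc⟩ := h1
    rw [hc] at hr
    have hodd : n % 2 = 1 := by
      rcases Nat.mod_two_eq_zero_or_one n with h | h
      · rw [Nat.mul_mod, h] at hr; simp at hr
      · exact h
    interval_cases n <;> omega
  let gN : N := ⟨⟨g, hgα⟩, hgX⟩
  have hpig : ∃ i ∈ Finset.range 4, ∃ j ∈ Finset.range 4, i ≠ j ∧ gN ^ i • B' = gN ^ j • B' := by
    refine Finset.exists_ne_map_eq_of_card_lt_of_maps_to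
      (t := (MulAction.orbit N B').toFinset) ?_ ?_
    · rw [← Set.ncard_eq_toFinset_card', Finset.card_range]; omega
    · intro i _
      simp [MulAction.mem_orbit]
  have hpow : ∀ i : ℕ, (gN ^ i • B').1 = g ^ i • B := fun i => rfl
  obtain ⟨i, hi, j, hj, hij, he⟩ := hpig
  have he := congrArg Subtype.val he
  rw [hpow, hpow] at he
  have hinv : ∀ n m : ℕ, g ^ (n + m) • B = g ^ n • g ^ m • B := fun n m => by
    rw [pow_add, mul_smul]
  have hfour : g ^ 4 • B = B := by rw [hg4, one_smul]
  have hdiff : ∀ i j : ℕ, i < j → j < 4 → g ^ i • B = g ^ j • B → g ^ 2 • B = B := by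
    intro i j hij hj he
    obtain ⟨d, rfl⟩ := Nat.exists_eq_add_of_lt hij
    rw [show i + d + 1 = i + (d + 1) from by ring, hinv i (d+1)] at he
    have he : B = g ^ (d+1) • B := MulAction.injective (g ^ i) he
    have hd : d < 3 := by omega
    interval_cases d
    · have h' : g • B = B := by simpa using he.symm
      rw [pow_two, mul_smul, h', h']
    · exact he.symm
    · have h' : g • B = B := by
        conv_lhs => rw [he]
        rw [← mul_smul, ← pow_succ']
        exact hfour
      rw [pow_two, mul_smul, h', h']
  rw [Finset.mem_range] at hi hj
  rcases lt_or_gt_of_ne hij with h | h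
  · exact hdiff i j h hj he
  · exact hdiff j i h hi he.symm

/-- If `z` fixes `α` and all blocks through `α` but moves `x`, then each of the three blocks on `α` and
`x` equals `{α, x, z • x}`, which is absurd. -/
lemma fix_of_three (hD : IsDesign 𝓑 3 3) (α : Pt) (z : G) (hzα : z • α = α)
    (hz : ∀ B ∈ 𝓑, α ∈ B → z • B = B) (x : Pt) : z • x = x := by
  classical
  by_cases hx : α = x
  · rw [← hx, hzα]
  have h3 := card_pair hD hx
  obtain ⟨B, hB, C, hC, hBC⟩ := Finset.one_lt_card.1 (by rw [h3]; norm_num :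
    1 < ((blocksAt 𝓑 α).filter fun B => x ∈ B).card)
  rw [Finset.mem_filter, mem_blocksAt] at hB hC
  by_contra hne
  have hsub : ∀ E ∈ 𝓑, α ∈ E → x ∈ E →
      (Finset.univ.filter fun y => y ∈ E) = {α, x, z • x} := by
    intro E hE hα hxE
    symm
    refine Finset.eq_of_subset_of_card_le ?_ ?_
    · intro y hy
      simp only [Finset.mem_insert, Finset.mem_singleton] at hy
      rw [Finset.mem_filter]
      refine ⟨Finset.mem_univ _, ?_⟩
      rcases hy with rfl | rfl | rfl
      · exact hα
      · exact hxE
      · rw [← hz E hE hα]; exact Set.smul_mem_smul_set hxE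
    · rw [card_block hD hE, Finset.card_eq_three.2 ⟨α, x, z • x, hx, ?_, Ne.symm hne, rfl⟩]
      intro h
      apply hx
      rw [← hzα] at h
      exact MulAction.injective z h
  apply hBC
  ext y
  have h1 := hsub B hB.1.1 hB.1.2 hB.2
  rw [← hsub C hC.1.1 hC.1.2 hC.2] at h1
  have := Finset.ext_iff.1 h1 y
  simpa using this

end Design
end FT

/-! ### Fixed points of elements of order four -/

namespace FT

/-- The elements of order four, in a form that transports along isomorphisms and is decidable. -/
def Ord4 {M : Type*} [Monoid M] (g : M) : Prop := g ^ 4 = 1 ∧ g ^ 2 ≠ 1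

instance {M : Type*} [Monoid M] [DecidableEq M] (g : M) : Decidable (Ord4 g) :=
  inferInstanceAs (Decidable (_ ∧ _))

lemma Ord4.orderOf_eq {M : Type*} [Monoid M] {g : M} (h : Ord4 g) : orderOf g = 4 :=
  orderOf_eq_prime_pow (p := 2) (n := 1) h.2 h.1

lemma ord4_map_iff {M N : Type*} [Monoid M] [Monoid N] (f : M →* N) (hf : Function.Injective f)
    (g : M) : Ord4 (f g) ↔ Ord4 g := by
  unfold Ord4
  rw [← map_pow, ← map_pow, map_eq_one_iff f hf, Ne, map_eq_one_iff f hf]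

lemma S4_card_ord4 :
    (Finset.univ.filter fun g : Equiv.Perm (Fin 4) => Ord4 g).card = 6 := by
  decide +kernel

/-- Three elements of order four that represent the three cyclic subgroups of order four of `S₄`. -/
def fourCycles : Finset (Equiv.Perm (Fin 4)) := {c[0, 1, 2, 3], c[0, 1, 3, 2], c[0, 2, 1, 3]}

lemma fourCycles_card : fourCycles.card = 3 := by decide +kernel

lemma fourCycles_ord4 : ∀ g ∈ fourCycles, Ord4 g := by decide +kernel

lemma mem_fourCycles : ∀ g : Equiv.Perm (Fin 4), Ord4 g → g ∈ fourCycles ∨ g⁻¹ ∈ fourCycles := by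
  decide +kernel

lemma S4_centralizer : ∀ g : Equiv.Perm (Fin 4), Ord4 g →
    (Finset.univ.filter fun x => g * x = x * g).card = 4 := by
  decide +kernel

section Fix

variable {Pt : Type*} [Fintype Pt] {X : Type*} [Group X] [Finite X] [MulAction X Pt]

lemma card_points [MulAction.IsPretransitive X Pt] (α : Pt) :
    Nat.card Pt * Nat.card (MulAction.stabilizer X α) = Nat.card X := by
  rw [← MulAction.index_stabilizer_of_transitive X α, Subgroup.index_mul_card]

/-- An element of order four fixes at most `|C(h)| / 4` points. The elements `x` with
`h • x • α = x • α` are counted twice: `x ↦ x • α` has fibres of size `24` over the fixed points of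
`h`, and `x ↦ x⁻¹ h x` maps to the six elements of order four of `X_α`, with fibres of size at most
`|C(h)|`. -/
lemma card_fix_le [MulAction.IsPretransitive X Pt] (α : Pt)
    (e : MulAction.stabilizer X α ≃* Equiv.Perm (Fin 4)) (h : X) (hh : Ord4 h) :
    4 * Nat.card {β : Pt // h • β = β} ≤ Nat.card {x : X // h * x = x * h} := by
  classical
  have := Fintype.ofFinite X
  let U : Finset X := Finset.univ.filter fun x => h • x • α = x • α
  let Fx : Finset Pt := Finset.univ.filter fun β => h • β = β
  let C : Finset X := Finset.univ.filter fun x => h * x = x * h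
  have hFx : Nat.card {β : Pt // h • β = β} = Fx.card := by
    rw [Nat.card_eq_fintype_card, Fintype.card_subtype]
  have hC : Nat.card {x : X // h * x = x * h} = C.card := by
    rw [Nat.card_eq_fintype_card, Fintype.card_subtype]
  rw [hFx, hC]
  have hstab : (Finset.univ.filter fun x : X => x • α = α).card = 24 := by
    rw [← Fintype.card_subtype, ← Nat.card_eq_fintype_card]
    have := Nat.card_congr e.toEquiv
    rw [Nat.card_eq_fintype_card (α := Equiv.Perm (Fin 4)), Fintype.card_perm] at this
    exact this
  have h1 : 24 * Fx.card ≤ U.card := by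
    have him : U.image (fun x => x • α) = Fx := by
      ext β
      simp only [U, Fx, Finset.mem_image, Finset.mem_filter, Finset.mem_univ, true_and]
      constructor
      · rintro ⟨x, hx, rfl⟩; exact hx
      · intro hβ
        obtain ⟨x, rfl⟩ := MulAction.exists_smul_eq X α β
        exact ⟨x, hβ, rfl⟩
    rw [← him]
    refine Finset.mul_card_image_le_card _ _ ?_
    intro β hβ
    obtain ⟨x, hx, rfl⟩ := Finset.mem_image.1 hβ
    rw [← hstab]
    refine Finset.card_le_card_of_injOn (fun s => x * s) ?_ ?_
    · intro s hs
      have hs : s • α = α := by simpa using hs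
      have hx : h • x • α = x • α := by simpa [U] using hx
      simp [U, mul_smul, hs, hx]
    · intro s _ s' _ hss
      exact mul_left_cancel hss
  have h2 : U.card ≤ C.card * 6 := by
    have himc : (U.image (fun x => x⁻¹ * h * x)).card ≤ 6 := by
      rw [← S4_card_ord4]
      have hmem : ∀ y ∈ U.image (fun x => x⁻¹ * h * x), y • α = α ∧ Ord4 y := by
        intro y hy
        obtain ⟨x, hx, rfl⟩ := Finset.mem_image.1 hy
        have hx : h • x • α = x • α := by simpa [U] using hx
        refine ⟨by rw [mul_smul, mul_smul, hx, inv_smul_smul], ?_⟩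
        have := (ord4_map_iff (MulAut.conj x⁻¹).toMonoidHom (MulAut.conj x⁻¹).injective h).2 hh
        simpa using this
      refine Finset.card_le_card_of_injOn
        (fun y => if hy : y • α = α then e ⟨y, hy⟩ else 1) ?_ ?_
      · intro y hy
        have := hmem y hy
        simp only [this.1, dite_true]
        rw [Finset.mem_coe, Finset.mem_filter]
        refine ⟨Finset.mem_univ _, ?_⟩
        refine (ord4_map_iff e.toMonoidHom e.injective _).2 ?_
        exact (ord4_map_iff (MulAction.stabilizer X α).subtype
          (Subgroup.subtype_injective _) ⟨y, this.1⟩).1 this.2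
      · intro y hy y' hy' hyy
        simp only [(hmem y hy).1, (hmem y' hy').1, dite_true] at hyy
        exact congrArg Subtype.val (e.injective hyy)
    refine (Finset.card_le_mul_card_image (f := fun x => x⁻¹ * h * x) U C.card ?_).trans
      (Nat.mul_le_mul_left _ himc)
    intro y hy
    obtain ⟨x, hx, rfl⟩ := Finset.mem_image.1 hy
    refine Finset.card_le_card_of_injOn (fun z => z * x⁻¹) ?_ ?_
    · intro z hz
      have hz : z⁻¹ * h * z = x⁻¹ * h * x := (Finset.mem_filter.1 hz).2
      have hz2 : h * z = z * (x⁻¹ * h * x) := by rw [← hz]; group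
      rw [Finset.mem_coe, Finset.mem_filter]
      refine ⟨Finset.mem_univ _, ?_⟩
      rw [← mul_assoc, hz2]; group
    · intro z _ z' _ hzz
      exact mul_right_cancel hzz
  omega

/-- The centralizer of `h` permutes the fixed points of `h`. If `α` were the only one, then `C(h)`
would embed in the centralizer of a four-cycle in `S₄`, which has order four. -/
lemma exists_fix (α : Pt)
    (e : MulAction.stabilizer X α ≃* Equiv.Perm (Fin 4)) (h : X) (hh : Ord4 h) (hα : h • α = α)
    (hC : 4 < Nat.card {x : X // h * x = x * h}) : ∃ β, β ≠ α ∧ h • β = β := by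
  classical
  have := Fintype.ofFinite X
  by_contra hno
  push Not at hno
  have hfix : ∀ x : X, h * x = x * h → x • α = α := by
    intro x hx
    by_contra hne
    exact hno _ hne (by rw [← mul_smul, hx, mul_smul, hα])
  have hs : Ord4 (⟨h, hα⟩ : MulAction.stabilizer X α) :=
    (ord4_map_iff (MulAction.stabilizer X α).subtype (Subgroup.subtype_injective _) ⟨h, hα⟩).1 hh
  have h4 := S4_centralizer (e ⟨h, hα⟩) ((ord4_map_iff e.toMonoidHom e.injective _).2 hs)
  rw [← Fintype.card_subtype, ← Nat.card_eq_fintype_card] at h4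
  rw [← h4] at hC
  refine absurd hC (not_lt.2 ?_)
  refine Nat.card_le_card_of_injective
    (fun x => ⟨e ⟨x.1, hfix x.1 x.2⟩, ?_⟩) ?_
  · rw [← map_mul, ← map_mul]
    exact congrArg e (Subtype.ext x.2)
  · intro x y hxy
    have h5 := congrArg (fun s : MulAction.stabilizer X α => (s : X))
      (e.injective (congrArg Subtype.val hxy))
    exact Subtype.ext h5

open scoped Classical in
/-- The points other than `α` that are fixed by an element of order four of the stabilizer of
`α`. -/
noncomputable def fixSet (X : Type*) [Group X] [MulAction X Pt] (α : Pt) : Finset Pt :=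
  Finset.univ.filter fun β => β ≠ α ∧ ∃ h : X, Ord4 h ∧ h • α = α ∧ h • β = β

/-- Each of the three cyclic subgroups of order four of `X_α ≅ S₄` contributes at most `n - 1` points. -/
lemma card_fixSet_le (α : Pt) (e : MulAction.stabilizer X α ≃* Equiv.Perm (Fin 4)) (n : ℕ)
    (hn : ∀ h : X, Ord4 h → Nat.card {β : Pt // h • β = β} ≤ n) :
    (fixSet X α).card ≤ 3 * (n - 1) := by
  classical
  let T : Finset X := fourCycles.image fun c => (e.symm c).1
  have hT : T.card ≤ 3 := fourCycles_card ▸ Finset.card_image_le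
  have hTo : ∀ h ∈ T, Ord4 h ∧ h • α = α := by
    intro h hh
    obtain ⟨c, hc, rfl⟩ := Finset.mem_image.1 hh
    refine ⟨?_, (e.symm c).2⟩
    refine (ord4_map_iff (MulAction.stabilizer X α).subtype (Subgroup.subtype_injective _) _).2 ?_
    exact (ord4_map_iff e.symm.toMonoidHom e.symm.injective c).2 (fourCycles_ord4 c hc)
  have hsub : fixSet X α ⊆
      T.biUnion fun h => (Finset.univ.filter fun β => h • β = β).erase α := by
    intro β hβ
    obtain ⟨hne, h, hh, hα, hβ⟩ := (Finset.mem_filter.1 hβ).2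
    have hs : Ord4 (⟨h, hα⟩ : MulAction.stabilizer X α) :=
      (ord4_map_iff (MulAction.stabilizer X α).subtype (Subgroup.subtype_injective _)
        ⟨h, hα⟩).1 hh
    rw [Finset.mem_biUnion]
    rcases mem_fourCycles (e ⟨h, hα⟩) ((ord4_map_iff e.toMonoidHom e.injective _).2 hs) with hm | hm
    · refine ⟨h, Finset.mem_image.2 ⟨_, hm, by simp⟩, ?_⟩
      simp [hne, hβ]
    · refine ⟨h⁻¹, Finset.mem_image.2 ⟨_, hm, by simp⟩, ?_⟩
      simp [hne, inv_smul_eq_iff, hβ]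
  refine (Finset.card_le_card hsub).trans ((Finset.card_biUnion_le_card_mul _ _ (n - 1) ?_).trans
    (Nat.mul_le_mul_right _ hT))
  intro h hh
  rw [Finset.card_erase_of_mem (by simp [(hTo h hh).2])]
  have := hn h (hTo h hh).1
  rw [Nat.card_eq_fintype_card, Fintype.card_subtype] at this
  omega

end Fix

/-- Normality of `X` makes `fixSet X α` invariant under the full stabilizer `G_α`. -/
lemma fixSet_invariant {Pt : Type*} [Fintype Pt] {G : Type*} [Group G] [MulAction G Pt]
    (X : Subgroup G) [hX : X.Normal] (α : Pt) (g : G) (hg : g • α = α) (β : Pt)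
    (hβ : β ∈ fixSet X α) : g • β ∈ fixSet X α := by
  classical
  obtain ⟨hne, h, hh, hα, hhβ⟩ := (Finset.mem_filter.1 hβ).2
  refine Finset.mem_filter.2 ⟨Finset.mem_univ _, ?_, ⟨g * h * g⁻¹, hX.conj_mem h.1 h.2 g⟩, ?_, ?_, ?_⟩
  · intro h'
    apply hne
    rw [← hg] at h'
    exact MulAction.injective g h'
  · refine (ord4_map_iff X.subtype (Subgroup.subtype_injective _) _).1 ?_
    have h1 : Ord4 (h : G) := (ord4_map_iff X.subtype (Subgroup.subtype_injective _) h).2 hh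
    exact (ord4_map_iff (MulAut.conj g).toMonoidHom (MulAut.conj g).injective (h : G)).2 h1
  · have hα : (h : G) • α = α := hα
    have hg' : g⁻¹ • α = α := by rw [inv_smul_eq_iff, hg]
    change (g * h * g⁻¹ : G) • α = α
    rw [mul_smul, mul_smul, hg', hα, hg]
  · have hhβ : (h : G) • β = β := hhβ
    change (g * h * g⁻¹ : G) • g • β = g • β
    rw [mul_smul, mul_smul, inv_smul_smul, hhβ]

/-- For `q ≥ 11` the bounds `v ≤ 3 r'² + 1` and `r' ≤ 3 (q - 7) / 8` are incompatible with
`48 v = q (q² - 1)`. -/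
lemma no_large {q v k r' : ℕ} (hq : 11 ≤ q) (hv : 48 * v = q * (q ^ 2 - 1))
    (hk : r' * (k - 1) = v - 1) (hkr : k ≤ 3 * r') (hr : 8 * r' ≤ 3 * (q - 7)) : False := by
  obtain ⟨u, rfl⟩ : ∃ u, q = u + 11 := ⟨q - 11, by omega⟩
  have e1 : (u + 11) ^ 2 - 1 = (u + 10) * (u + 12) := by ring_nf; omega
  rw [e1] at hv
  have hr : 8 * r' ≤ 3 * (u + 4) := by omega
  have h1 : v ≤ 3 * r' ^ 2 + 1 := by
    have : r' * (k - 1) ≤ r' * (3 * r') := Nat.mul_le_mul_left _ (by omega)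
    have : r' * (3 * r') = 3 * r' ^ 2 := by ring
    omega
  have h2 : (8 * r') ^ 2 ≤ (3 * (u + 4)) ^ 2 := Nat.pow_le_pow_left hr 2
  nlinarith [sq_nonneg (u : ℕ), Nat.zero_le (u ^ 3)]

/-- For `q < 11` only `v = 7` (`q = 7`) and `v = 15` (`q = 9`) are possible, and the divisibility
conditions on the parameters leave only `k = 3`. -/
lemma small_cases {q v k b r' : ℕ} (hq : 4 ≤ q) (hq' : q < 11) (hv : 48 * v = q * (q ^ 2 - 1))
    (hk : r' * (k - 1) = v - 1) (hk2 : 2 < k) (hkv : k < v - 1) (hb : b * k = v * (3 * r')) :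
    k = 3 ∧ (3 * r') % 2 = 1 := by
  have hv' : v ≤ 20 := by interval_cases q <;> omega
  have hv2 : v = 7 ∨ v = 15 := by interval_cases q <;> omega
  rcases hv2 with rfl | rfl
  · interval_cases k <;> omega
  · have : k < 14 := hkv
    interval_cases k <;> omega

end FT

/-- In the setting of a non-trivial, non-symmetric flag-transitive,
point-primitive `2-(v,k,3)` design with `3 ∣ r`, almost simple automorphism group `G` with
socle `X ≅ PSL(2,q)` acting point-primitively with maximal point stabilizer `X_α`:
the stabilizer `X_α` is not isomorphic to the symmetric group `S₄` (in particular, the case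
`q = p ≡ ±1 (mod 8)` prime, `X_α ≅ S₄`, `v = q(q²−1)/48` does not occur). -/
theorem stmt_13
    (q : ℕ) (hq4 : 4 ≤ q)
    (F : Type) [Field F] [Fintype F] (hF : Fintype.card F = q)
    {Pt : Type*} [Fintype Pt] {G : Type*} [Group G] [MulAction G Pt] [FaithfulSMul G Pt]
    -- `D = (Pt, 𝓑)` is a non-trivial, non-symmetric `2-(v,k,3)` design …
    (𝓑 : Set (Set Pt)) (v k : ℕ) (hv : Nat.card Pt = v)
    (hD : IsDesign 𝓑 k 3) (hnt : 2 < k ∧ k < v - 1)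
    (hnonsym : Nat.card 𝓑 ≠ v)
    -- … whose replication number `r` is divisible by 3, …
    (r : ℕ) (hr : ∀ x : Pt, repNum 𝓑 x = r) (h3r : 3 ∣ r)
    -- … admitting the flag-transitive, point-primitive automorphism group `G`, …
    (hacts : ActsOn G 𝓑) (hflag : FlagTransitive G 𝓑)
    (hprim : PointPrimitive G Pt)
    -- … where `G` is almost simple with socle `X ≅ PSL(2,q)` (so `PSL(2,q) ⊴ G ≤ PΓL(2,q)`):
    (X : Subgroup G) (hXnormal : X.Normal)
    (hXiso : Nonempty (X ≃* PSL2 F))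
    (hXcent : Subgroup.centralizer (X : Set G) = ⊥)
    -- `X` acts point-primitively on `D`, with maximal point stabilizer `X_α`:
    (hXprim : PointPrimitive X Pt)
    (α : Pt) (hmax : IsCoatom (MulAction.stabilizer X α))
    :
    IsEmpty ((MulAction.stabilizer X α) ≃* Equiv.Perm (Fin 4)) := by
  classical
  subst hF hv
  refine ⟨fun e => ?_⟩
  obtain ⟨φ⟩ := hXiso
  obtain ⟨hk2, hkv⟩ := hnt
  have hfinG : Finite G :=
    Finite.of_injective (MulAction.toPerm : G → Equiv.Perm Pt) MulAction.toPerm_injective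
  have htrans : MulAction.IsPretransitive X Pt := hXprim.1
  -- an element of order four in the point stabilizer
  let h : X := (e.symm c[0, 1, 2, 3]).1
  have hα : h • α = α := (e.symm c[0, 1, 2, 3]).2
  have hh : Ord4 h := by
    refine (ord4_map_iff (MulAction.stabilizer X α).subtype (Subgroup.subtype_injective _) _).2 ?_
    refine (ord4_map_iff e.symm.toMonoidHom e.symm.injective _).2 ?_
    exact fourCycles_ord4 _ (by decide +kernel)
  have hcent : ∀ g : X, Ord4 g → (2 : F) ≠ 0 ∧
      2 * Nat.card {x : X // g * x = x * g} ≤ Fintype.card F + 1 ∧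
      Fintype.card F ≤ 2 * Nat.card {x : X // g * x = x * g} + 2 := by
    intro g hg
    have h1 := card_centralizer_PSL (φ g)
      ((ord4_map_iff φ.toMonoidHom φ.injective g).2 hg).orderOf_eq
    have h2 : Nat.card {x : X // g * x = x * g} = Nat.card {y : PSL2 F // φ g * y = y * φ g} := by
      refine Nat.card_congr (φ.toEquiv.subtypeEquiv fun x => ?_)
      change _ ↔ φ g * φ x = φ x * φ g
      rw [← map_mul, ← map_mul, φ.injective.eq_iff]
    rwa [h2]
  have h24 : Nat.card (MulAction.stabilizer X α) = 24 := by
    rw [Nat.card_congr e.toEquiv, Nat.card_eq_fintype_card, Fintype.card_perm]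
    rfl
  have hv : 48 * Nat.card Pt = Fintype.card F * (Fintype.card F ^ 2 - 1) := by
    rw [← card_PSL (hcent h hh).1, ← Nat.card_congr φ.toEquiv, ← card_points (X := X) α, h24]
    ring
  obtain ⟨r', rfl⟩ := h3r
  have hk : r' * (k - 1) = Nat.card Pt - 1 := by
    have := rep_eq hD α
    rw [hr α] at this
    exact Nat.eq_of_mul_eq_mul_left (by norm_num : 0 < 3) (by rw [← this, mul_assoc])
  have hr' : 1 < r' := by
    by_contra hle
    have : r' * (k - 1) ≤ 1 * (k - 1) := Nat.mul_le_mul_right _ (by omega)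
    omega
  have hb := flag_count hD hr
  rcases lt_or_ge (Fintype.card F) 11 with hq | hq
  -- small `q`: the square of an element of order four would act trivially
  · obtain ⟨rfl, hodd⟩ := small_cases hq4 hq hv hk hk2 hkv hb
    have hz : ∀ x : Pt, ((h : G) ^ 2) • x = x := by
      have hα' : (h : G) • α = α := hα
      refine fix_of_three hD α _ (by rw [pow_two, mul_smul, hα', hα']) ?_
      intro B hB hαB
      exact sq_smul_block hacts hflag X α h24 (by rw [hr α]; exact hodd) (h : G) h.2 hα
        (congrArg Subtype.val hh.1) B hB hαB
    refine hh.2 (Subtype.ext ?_)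
    exact FaithfulSMul.eq_of_smul_eq_smul fun x : Pt =>
      (hz x).trans (one_smul G x).symm
  -- large `q`: `r'` divides the number of points of `fixSet X α`, which is too small
  · have hkr : k ≤ 3 * r' := by
      have hF := fisher hD hr (by omega)
      have hpos : 0 < Nat.card Pt := by omega
      refine Nat.le_of_mul_le_mul_left ?_ hpos
      rw [← hb]
      exact Nat.mul_le_mul_right _ hF
    have hle : (fixSet X α).card ≤ 3 * ((Fintype.card F + 1) / 8 - 1) := by
      refine card_fixSet_le α e _ fun g hg => ?_
      have h1 := card_fix_le α e g hg
      have h2 := (hcent g hg).2.1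
      omega
    have hpos : 0 < (fixSet X α).card := by
      obtain ⟨β, hne, hβ⟩ := exists_fix α e h hh hα (by have := (hcent h hh).2.2; omega)
      exact Finset.card_pos.2 ⟨β, Finset.mem_filter.2 ⟨Finset.mem_univ _, hne, h, hh, hα, hβ⟩⟩
    have hdvd := rep_dvd hD hflag α (fixSet X α) (by simp [fixSet])
      (fun g hg β hβ => fixSet_invariant X α g hg β hβ)
    rw [hr α] at hdvd
    have hr'le : r' ≤ (fixSet X α).card :=
      Nat.le_of_dvd hpos (Nat.dvd_of_mul_dvd_mul_left (by norm_num) hdvd)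
    exact no_large hq hv hk hkr (by omega)
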